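/- Let X and Y be real Banach spaces, let F : X → Y be continuous, and let x̄ ∈ X satisfy F(x̄) = 0. For every h > 0 let F_h : X → Y be continuous. Assume: (i) F_h(x̄) → 0 in Y as h → 0; (ii) F and every F_h are Fréchet differentiable at x̄, the operator norms ‖dF[x̄] − dF_h[x̄]‖_{L(X,Y)} tend to 0 as h → 0, and there exists a nondecreasing function c : (0,∞) → [0,∞) with c(r) → 0 as r → 0⁺ such that for every r > 0, every h > 0 and all x, x′ in the ball B_X(x̄, r) one has ‖F(x) − F(x′) − dF[x̄](x − x′)‖_Y ≤ c(r)‖x − x′‖_X and ‖F_h(x) − F_h(x′) − dF_h[x̄](x − x′)‖_Y ≤ c(r)‖x − x′‖_X; (iii) dF[x̄] is an isomorphism from X onto Y (a bijective continuous linear map with continuous inverse). Then there exist a neighborhood O of x̄ in X and h₀ > 0 such that for every 0 < h ≤ h₀ there exists a unique x̄_h ∈ O with F_h(x̄_h) = 0, and moreover ‖x̄ − x̄_h‖_X ≤ 2 ‖dF[x̄]⁻¹‖_{L(Y,X)} ‖F_h(x̄)‖_Y. -/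

import Mathlib

open Filter Metric

/-- Brezzi–Rappaz–Raviart approximation theorem (reworked version). -/
theorem brezzi_rappaz_raviart
    {X Y : Type*} [NormedAddCommGroup X] [NormedSpace ℝ X] [CompleteSpace X]
    [NormedAddCommGroup Y] [NormedSpace ℝ Y] [CompleteSpace Y]
    (F : X → Y) (Fh : ℝ → X → Y) (xb : X)
    (hFcont : Continuous F)
    (hFhcont : ∀ h : ℝ, 0 < h → Continuous (Fh h))
    (hFzero : F xb = 0)
    -- (i) F_h(xb) → 0 as h → 0⁺
    (hFh0 : Tendsto (fun h => Fh h xb) (nhdsWithin 0 (Set.Ioi 0)) (nhds 0))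
    -- (iii) dF[xb] is an isomorphism (encoded as a continuous linear equivalence)
    (dF : X ≃L[ℝ] Y) (hdF : HasFDerivAt F (dF : X →L[ℝ] Y) xb)
    -- (ii) differentiability of the F_h at xb and convergence of the derivatives
    (dFh : ℝ → X →L[ℝ] Y)
    (hdFh : ∀ h : ℝ, 0 < h → HasFDerivAt (Fh h) (dFh h) xb)
    (hconv : Tendsto (fun h => ‖(dF : X →L[ℝ] Y) - dFh h‖)
      (nhdsWithin 0 (Set.Ioi 0)) (nhds 0))
    -- the common modulus c
    (c : ℝ → ℝ) (hc_nonneg : ∀ r, 0 ≤ c r) (hc_mono : MonotoneOn c (Set.Ioi 0))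
    (hc_lim : Tendsto c (nhdsWithin 0 (Set.Ioi 0)) (nhds 0))
    (hF_lip : ∀ r > (0:ℝ), ∀ x ∈ ball xb r, ∀ x' ∈ ball xb r,
      ‖F x - F x' - (dF : X →L[ℝ] Y) (x - x')‖ ≤ c r * ‖x - x'‖)
    (hFh_lip : ∀ h > (0:ℝ), ∀ r > (0:ℝ), ∀ x ∈ ball xb r, ∀ x' ∈ ball xb r,
      ‖Fh h x - Fh h x' - dFh h (x - x')‖ ≤ c r * ‖x - x'‖) :
    ∃ O ∈ nhds xb, ∃ h₀ > (0:ℝ), ∀ h : ℝ, 0 < h → h ≤ h₀ →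
      ∃ xh, (xh ∈ O ∧ Fh h xh = 0) ∧
        (∀ y, y ∈ O → Fh h y = 0 → y = xh) ∧
        ‖xb - xh‖ ≤ 2 * ‖(dF.symm : Y →L[ℝ] X)‖ * ‖Fh h xb‖ := by
  set M : ℝ := ‖(dF.symm : Y →L[ℝ] X)‖ with hM
  have hM0 : 0 ≤ M := norm_nonneg _
  set δ : ℝ := 1 / (4 * (M + 1)) with hδ
  have hδ0 : 0 < δ := by positivity
  have hMδ : M * (2 * δ) ≤ 1 / 2 := by
    rw [hδ]
    field_simp
    linarith
  -- choose the radius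
  obtain ⟨r, hcr, hr0⟩ : ∃ r, c r < δ ∧ 0 < r := by
    have h1 : ∀ᶠ r in nhdsWithin (0:ℝ) (Set.Ioi 0), c r < δ :=
      hc_lim.eventually (gt_mem_nhds hδ0)
    have h2 : ∀ᶠ r in nhdsWithin (0:ℝ) (Set.Ioi 0), 0 < r := self_mem_nhdsWithin
    exact (h1.and h2).exists
  -- choose h₀
  have hη0 : 0 < r / (4 * (M + 1)) := by positivity
  have hev : ∀ᶠ h in nhdsWithin (0:ℝ) (Set.Ioi 0),
      ‖(dF : X →L[ℝ] Y) - dFh h‖ < δ ∧ ‖Fh h xb‖ < r / (4 * (M + 1)) := by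
    refine (hconv.eventually (gt_mem_nhds hδ0)).and ?_
    have h3 := hFh0.norm
    rw [norm_zero] at h3
    exact h3.eventually (gt_mem_nhds hη0)
  obtain ⟨u, hu0, hu⟩ := mem_nhdsGT_iff_exists_Ioc_subset.mp hev
  have hsub : closedBall xb (r / 2) ⊆ ball xb r := closedBall_subset_ball (by linarith)
  refine ⟨closedBall xb (r / 2), closedBall_mem_nhds _ (by linarith), u, hu0, ?_⟩
  intro h hh0 hhu
  obtain ⟨hA, hB⟩ := hu ⟨hh0, hhu⟩
  have hxb : xb ∈ closedBall xb (r / 2) := mem_closedBall_self (by linarith)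
  let T : X → X := fun x => x - dF.symm (Fh h x)
  have hT : ∀ x ∈ closedBall xb (r / 2), ∀ x' ∈ closedBall xb (r / 2),
      ‖T x - T x'‖ ≤ 1 / 2 * ‖x - x'‖ := by
    intro x hx x' hx'
    have e : T x - T x' = (dF.symm : Y →L[ℝ] X)
        (((dF : X →L[ℝ] Y) - dFh h) (x - x') - (Fh h x - Fh h x' - dFh h (x - x'))) := by
      simp only [T, map_sub, ContinuousLinearMap.sub_apply, ContinuousLinearEquiv.coe_coe,
        ContinuousLinearEquiv.symm_apply_apply]
      abel
    have h1 := hFh_lip h hh0 r hr0 x (hsub hx) x' (hsub hx')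
    have h2 := ((dF : X →L[ℝ] Y) - dFh h).le_opNorm (x - x')
    have hn := norm_nonneg (x - x')
    rw [e]
    calc _ ≤ M * ‖((dF : X →L[ℝ] Y) - dFh h) (x - x') - (Fh h x - Fh h x' - dFh h (x - x'))‖ :=
          ContinuousLinearMap.le_opNorm _ _
      _ ≤ M * (2 * δ * ‖x - x'‖) := by
          refine mul_le_mul_of_nonneg_left ?_ hM0
          refine (norm_sub_le _ _).trans ?_
          have h4 := mul_le_mul_of_nonneg_right hA.le hn
          have h5 := mul_le_mul_of_nonneg_right hcr.le hn
          linarith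
      _ = M * (2 * δ) * ‖x - x'‖ := by ring
      _ ≤ _ := mul_le_mul_of_nonneg_right hMδ hn
  have hTb : ‖T xb - xb‖ ≤ M * ‖Fh h xb‖ := by
    have e : T xb - xb = -((dF.symm : Y →L[ℝ] X) (Fh h xb)) := by
      simp [T]
    rw [e, norm_neg]
    exact ContinuousLinearMap.le_opNorm _ _
  have hTb' : M * ‖Fh h xb‖ ≤ r / 4 := by
    calc M * ‖Fh h xb‖ ≤ M * (r / (4 * (M + 1))) := mul_le_mul_of_nonneg_left hB.le hM0
      _ ≤ r / 4 := by
        field_simp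
        linarith
  have htri : ∀ x ∈ closedBall xb (r / 2),
      ‖T x - xb‖ ≤ 1 / 2 * ‖x - xb‖ + M * ‖Fh h xb‖ := by
    intro x hx
    have h1 := hT x hx xb hxb
    have h2 := norm_sub_le_norm_sub_add_norm_sub (T x) (T xb) xb
    linarith
  have hmaps : Set.MapsTo T (closedBall xb (r / 2)) (closedBall xb (r / 2)) := by
    intro x hx
    have h1 := htri x hx
    rw [mem_closedBall, dist_eq_norm] at hx ⊢
    linarith
  have hcontr : ContractingWith (1 / 2 : NNReal) (hmaps.restrict T _ _) := by
    refine ⟨by rw [← NNReal.coe_lt_coe]; norm_num, LipschitzWith.of_dist_le_mul ?_⟩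
    rintro ⟨x, hx⟩ ⟨y, hy⟩
    have h1 := hT x hx y hy
    rw [Subtype.dist_eq, Subtype.dist_eq, dist_eq_norm, dist_eq_norm]
    simpa using h1
  obtain ⟨xh, hxh, hfix, -⟩ := ContractingWith.exists_fixedPoint' isClosed_closedBall.isComplete
    hmaps hcontr hxb (edist_ne_top _ _)
  have hfix' : T xh = xh := hfix
  refine ⟨xh, ⟨hxh, ?_⟩, ?_, ?_⟩
  · have h1 : dF.symm (Fh h xh) = 0 := sub_eq_self.mp hfix'
    simpa using h1
  · intro y hy hy0
    have hTy : T y = y := by simp [T, hy0]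
    have h1 := hT y hy xh hxh
    rw [hTy, hfix'] at h1
    have h2 : ‖y - xh‖ = 0 := le_antisymm (by linarith) (norm_nonneg _)
    exact sub_eq_zero.mp (norm_eq_zero.mp h2)
  · have h1 := htri xh hxh
    rw [hfix'] at h1
    rw [norm_sub_rev]
    linarith
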